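/- Let d ≥ 1, let m > 2d be a real number, and let χ : ℝ^{2d} → ℝ^{2d} be a measurable bijection with measurable inverse which preserves Lebesgue measure. Let T be a continuous linear operator from the Schwartz space 𝒮(ℝ^d) to the space of tempered distributions 𝒮′(ℝ^d), and let A ≥ 0 be such that |⟨T(π(z)g), π(w)g⟩| ≤ A·(1+|w−χ(z)|²)^{−m/2} for all z, w ∈ ℝ^{2d}. Then there exists a constant C > 0 depending only on m and d such that for every p ∈ [1,∞] and every f ∈ 𝒮(ℝ^d): ‖V_g(Tf)‖_{L^p(ℝ^{2d})} ≤ C·A·‖V_g f‖_{L^p(ℝ^{2d})}. -/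

import Mathlib

open MeasureTheory Complex Real
open scoped ENNReal RealInnerProductSpace

noncomputable section

abbrev E (d : ℕ) : Type := EuclideanSpace ℝ (Fin d)

/-- Phase space `ℝ^{2d} = ℝ^d × ℝ^d`. -/
abbrev P (d : ℕ) : Type := E d × E d

/-- The Schwartz space `𝒮(ℝ^d)` of complex valued functions. -/
abbrev SCH (d : ℕ) : Type := SchwartzMap (E d) ℂ

/-- Square of the Euclidean norm on the phase space `ℝ^{2d}`. -/
def ensq {d : ℕ} (z : P d) : ℝ := ‖z.1‖ ^ 2 + ‖z.2‖ ^ 2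

open Filter SchwartzMap LineDeriv
open scoped Topology FourierTransform ComplexConjugate ContDiff BoundedContinuousFunction

/-!
Wave packet inversion expands a Schwartz function as
`f = c⁻¹ ∫ V_γ f (z) π(z)g dz` with `c = (2π) ^ dim V * ∫ conj γ * g`.
Since `V_γ f` decays rapidly while every Schwartz seminorm of `π(z)g` grows at most polynomially
in `z`, this is a weak integral in the Schwartz space, so it may be paired with the functional
`⟨T ·, π(w)g⟩`. This dominates `|V_g (T f) (w)|` by
`|c⁻¹| A ∫ (1 + |w - χ z|²) ^ (-m / 2) |V_g f (z)| dz`.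
As `χ` preserves Lebesgue measure, all rows and columns of this kernel have the same integral,
finite because `m` exceeds the dimension of phase space, and Schur's test concludes.
-/

section WeakIntegral

variable {𝕜 : Type*} [RCLike 𝕜]

theorem exists_continuousLinearMap_comp_eq_of_norm_le {X Y : Type*} [AddCommGroup X] [Module 𝕜 X]
    [NormedAddCommGroup Y] [NormedSpace 𝕜 Y] (J : X →ₗ[𝕜] Y) (L : X →ₗ[𝕜] 𝕜) (C : ℝ)
    (h : ∀ x, ‖L x‖ ≤ C * ‖J x‖) : ∃ Λ : Y →L[𝕜] 𝕜, ∀ x, Λ (J x) = L x := by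
  have hker : LinearMap.ker J ≤ LinearMap.ker L := fun x hx => by
    simpa [LinearMap.mem_ker.1 hx] using h x
  let l : LinearMap.range J →ₗ[𝕜] 𝕜 :=
    (LinearMap.ker J).liftQ L hker ∘ₗ J.quotKerEquivRange.symm.toLinearMap
  have hl : ∀ x (hx : J x ∈ LinearMap.range J), l ⟨J x, hx⟩ = L x := fun x hx => by
    simp [l, LinearMap.quotKerEquivRange_symm_apply_image]
  obtain ⟨Λ, hΛ, -⟩ := exists_extension_norm_eq (LinearMap.range J) (l.mkContinuous C (by
    rintro ⟨_, x, rfl⟩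
    exact (hl x _).symm ▸ h x))
  exact ⟨Λ, fun x => (hΛ ⟨J x, x, rfl⟩).trans (hl x _)⟩

theorem map_eq_integral_of_norm_le_norm_pi {X Z ι : Type*} [AddCommGroup X] [Module 𝕜 X]
    [MeasurableSpace Z] {μ : Measure Z} [Fintype ι] {Y : ι → Type*}
    [∀ i, NormedAddCommGroup (Y i)] [∀ i, NormedSpace ℝ (Y i)] [∀ i, NormedSpace 𝕜 (Y i)]
    [∀ i, CompleteSpace (Y i)] (J : ∀ i, X →ₗ[𝕜] Y i) (L : X →ₗ[𝕜] 𝕜) {C : ℝ}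
    (hL : ∀ x, ‖L x‖ ≤ C * ‖fun i => J i x‖) {H : Z → X} {x : X}
    (hint : ∀ i, Integrable (fun z => J i (H z)) μ) (hx : ∀ i, J i x = ∫ z, J i (H z) ∂μ) :
    L x = ∫ z, L (H z) ∂μ := by
  obtain ⟨Λ, hΛ⟩ := exists_continuousLinearMap_comp_eq_of_norm_le (.pi J) L C hL
  calc L x = Λ (LinearMap.pi J x) := (hΛ x).symm
    _ = Λ (∫ z, LinearMap.pi J (H z) ∂μ) :=
      congrArg Λ (funext fun i => (hx i).trans (eval_integral hint i).symm)
    _ = ∫ z, Λ (LinearMap.pi J (H z)) ∂μ := (Λ.integral_comp_comm (Integrable.of_eval hint)).symm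
    _ = ∫ z, L (H z) ∂μ := integral_congr_ae (.of_forall fun z => hΛ (H z))

variable {Z : Type*} [TopologicalSpace Z] [MeasurableSpace Z] [OpensMeasurableSpace Z]
  {μ : Measure Z}

theorem map_eq_integral_of_norm_le_norm_boundedContinuousFunction {X S ι : Type*}
    [SecondCountableTopology Z] [AddCommGroup X] [Module 𝕜 X] [TopologicalSpace X]
    [TopologicalSpace S] [Fintype ι] {Y : ι → Type*} [∀ i, NormedAddCommGroup (Y i)]
    [∀ i, NormedSpace ℝ (Y i)] [∀ i, NormedSpace 𝕜 (Y i)] [∀ i, CompleteSpace (Y i)]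
    (J : ∀ i, X →L[𝕜] S →ᵇ Y i) (L : X →ₗ[𝕜] 𝕜) {C : ℝ}
    (hL : ∀ x, ‖L x‖ ≤ C * ‖fun i => J i x‖) {H : Z → X} (hH : Continuous H)
    (hint : ∀ i, Integrable (fun z => ‖J i (H z)‖) μ) {x : X}
    (hx : ∀ i s, J i x s = ∫ z, J i (H z) s ∂μ) : L x = ∫ z, L (H z) ∂μ := by
  have hJ : ∀ i, Integrable (fun z => J i (H z)) μ := fun i =>
    (integrable_norm_iff ((J i).continuous.comp hH).aestronglyMeasurable).1 (hint i)
  refine map_eq_integral_of_norm_le_norm_pi (fun i => (J i).toLinearMap) L hL hJ fun i => ?_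
  ext s
  exact (hx i s).trans ((BoundedContinuousFunction.evalCLM 𝕜 s).integral_comp_comm (hJ i))

theorem integrable_seminorm_comp_of_withSeminorms {X ι : Type*} [AddCommGroup X] [Module 𝕜 X]
    [TopologicalSpace X] {p : SeminormFamily 𝕜 X ι} (hp : WithSeminorms p) {H : Z → X}
    (hH : Continuous H) (hint : ∀ i, Integrable (fun z => p i (H z)) μ) {q : Seminorm 𝕜 X}
    (hq : Continuous q) : Integrable (fun z => q (H z)) μ := by
  obtain ⟨s, C, -, hC⟩ := Seminorm.bound_of_continuous hp q hq
  refine ((integrable_finsetSum s fun i _ => hint i).const_mul (C : ℝ)).mono'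
    (hq.comp hH).aestronglyMeasurable (.of_forall fun z => ?_)
  rw [Real.norm_of_nonneg (apply_nonneg q _)]
  calc q (H z) ≤ C * s.sup p (H z) := hC (H z)
    _ ≤ C * ∑ i ∈ s, p i (H z) := by
      gcongr
      simpa only [sum_apply] using Seminorm.finset_sup_le_sum p s (H z)

variable {V F : Type*} [NormedAddCommGroup V] [NormedSpace ℝ V] [NormedAddCommGroup F]
  [NormedSpace ℝ F] [NormedSpace 𝕜 F] [SMulCommClass ℝ 𝕜 F]

variable (𝕜 V F) in
/-- The weighted derivative `x ↦ ‖x‖ ^ k • D ^ n f x` of a Schwartz function `f`, as a continuous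
linear map into a Banach space whose norm pulls back to the `(k, n)` Schwartz seminorm. -/
def weightedDerivCLM (k n : ℕ) : 𝓢(V, F) →L[𝕜] (V →ᵇ V [×n]→L[ℝ] F) :=
  SchwartzMap.mkCLMtoNormedSpace (𝕜 := 𝕜) (D := V) (E := F)
    (fun f : 𝓢(V, F) => BoundedContinuousFunction.ofNormedAddCommGroup
      (fun x => ‖x‖ ^ k • iteratedFDeriv ℝ n f x)
      ((continuous_norm.pow k).smul
        ((f.smooth ⊤).continuous_iteratedFDeriv (m := n) (by exact_mod_cast le_top)))
      (SchwartzMap.seminorm 𝕜 k n f)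
      fun x => by simpa [norm_smul] using f.le_seminorm 𝕜 k n x)
    (fun f g => by
      ext1 x
      exact (congrArg (‖x‖ ^ k • ·) (iteratedFDeriv_add_apply (f.smooth n).contDiffAt
        (g.smooth n).contDiffAt)).trans (smul_add _ _ _))
    (fun a f => by
      ext1 x
      exact (congrArg (‖x‖ ^ k • ·) (iteratedFDeriv_const_smul_apply
        (f.smooth n).contDiffAt)).trans (smul_comm _ _ _))
    ⟨{(k, n)}, 1, zero_le_one, fun f => by
      rw [one_mul, Finset.sup_singleton]
      exact BoundedContinuousFunction.norm_ofNormedAddCommGroup_le _ (apply_nonneg _ _) _⟩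

theorem weightedDerivCLM_apply (k n : ℕ) (f : 𝓢(V, F)) (x : V) :
    weightedDerivCLM 𝕜 V F k n f x = ‖x‖ ^ k • iteratedFDeriv ℝ n f x := rfl

theorem norm_weightedDerivCLM (k n : ℕ) (f : 𝓢(V, F)) :
    ‖weightedDerivCLM 𝕜 V F k n f‖ = SchwartzMap.seminorm 𝕜 k n f := by
  refine le_antisymm (BoundedContinuousFunction.norm_ofNormedAddCommGroup_le _
    (apply_nonneg _ _) fun x => by simpa [norm_smul] using f.le_seminorm 𝕜 k n x) ?_
  refine f.seminorm_le_bound 𝕜 k n (norm_nonneg (weightedDerivCLM 𝕜 V F k n f)) fun x => ?_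
  simpa [weightedDerivCLM_apply, norm_smul] using
    (weightedDerivCLM 𝕜 V F k n f).norm_coe_le_norm x

theorem continuous_schwartzMap_eval_const (x : V) : Continuous fun f : 𝓢(V, F) => f x :=
  (BoundedContinuousFunction.evalCLM ℝ x).continuous.comp
    (SchwartzMap.toBoundedContinuousFunctionCLM ℝ V F).continuous

variable {H : Z → 𝓢(V, F)} {f : 𝓢(V, F)}

theorem integrable_seminorm_continuousLinearMap_comp {W G : Type*} [NormedAddCommGroup W]
    [NormedSpace ℝ W] [NormedAddCommGroup G] [NormedSpace ℝ G] [NormedSpace 𝕜 G]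
    [SMulCommClass ℝ 𝕜 G] (hH : Continuous H)
    (hint : ∀ i, Integrable (fun z => schwartzSeminormFamily 𝕜 V F i (H z)) μ)
    (K : 𝓢(V, F) →L[𝕜] 𝓢(W, G)) (i : ℕ × ℕ) :
    Integrable (fun z => schwartzSeminormFamily 𝕜 W G i (K (H z))) μ :=
  integrable_seminorm_comp_of_withSeminorms (schwartz_withSeminorms 𝕜 V F) hH hint
    (q := (schwartzSeminormFamily 𝕜 W G i).comp K.toLinearMap)
    (((schwartz_withSeminorms 𝕜 W G).continuous_seminorm i).comp K.continuous)

variable [SecondCountableTopology Z]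

theorem lineDerivOp_apply_eq_integral (hH : Continuous H)
    (hint : ∀ i, Integrable (fun z => schwartzSeminormFamily 𝕜 V F i (H z)) μ)
    (hf : ∀ x, f x = ∫ z, H z x ∂μ) (v x : V) : ∂_{v} f x = ∫ z, ∂_{v} (H z) x ∂μ := by
  let D := SchwartzMap.fderivCLM 𝕜 V F
  have hbound : Integrable (fun z => SchwartzMap.seminorm 𝕜 0 0 (D (H z))) μ :=
    integrable_seminorm_continuousLinearMap_comp hH hint D (0, 0)
  have hmeas : ∀ y, AEStronglyMeasurable (fun z => H z y) μ := fun y =>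
    ((continuous_schwartzMap_eval_const y).comp hH).aestronglyMeasurable
  have hmeas' : AEStronglyMeasurable (fun z => fderiv ℝ (H z) x) μ :=
    ((continuous_schwartzMap_eval_const x).comp (D.continuous.comp hH)).aestronglyMeasurable
  have hle : ∀ z y, ‖fderiv ℝ (H z) y‖ ≤ SchwartzMap.seminorm 𝕜 0 0 (D (H z)) :=
    fun z y => (D (H z)).norm_le_seminorm 𝕜 y
  have hderiv : HasFDerivAt f (∫ z, fderiv ℝ (H z) x ∂μ) x := by
    rw [show ⇑f = fun y => ∫ z, H z y ∂μ from funext hf]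
    exact hasFDerivAt_integral_of_dominated_of_fderiv_le univ_mem (.of_forall hmeas)
      ((hint (0, 0)).mono' (hmeas x) (.of_forall fun z => (H z).norm_le_seminorm 𝕜 x)) hmeas'
      (.of_forall fun z y _ => hle z y) hbound (.of_forall fun z y _ => (H z).hasFDerivAt y)
  simp only [SchwartzMap.lineDerivOp_apply_eq_fderiv]
  rw [hderiv.fderiv, ContinuousLinearMap.integral_apply
    (hbound.mono' hmeas' (.of_forall fun z => hle z x))]

theorem iteratedLineDerivOp_apply_eq_integral (hH : Continuous H)
    (hint : ∀ i, Integrable (fun z => schwartzSeminormFamily 𝕜 V F i (H z)) μ)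
    (hf : ∀ x, f x = ∫ z, H z x ∂μ) {n : ℕ} (v : Fin n → V) (x : V) :
    ∂^{v} f x = ∫ z, ∂^{v} (H z) x ∂μ := by
  induction n generalizing x with
  | zero => simpa using hf x
  | succ n ih =>
    let D := iteratedLineDerivOpCLM 𝕜 𝓢(V, F) (Fin.tail v)
    simp only [iteratedLineDerivOp_succ_left]
    exact lineDerivOp_apply_eq_integral (H := fun z => D (H z)) (D.continuous.comp hH)
      (integrable_seminorm_continuousLinearMap_comp hH hint D) (ih (Fin.tail v)) (v 0) x

theorem weightedDerivCLM_apply_eq_integral (hH : Continuous H)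
    (hint : ∀ i, Integrable (fun z => schwartzSeminormFamily 𝕜 V F i (H z)) μ)
    (hf : ∀ x, f x = ∫ z, H z x ∂μ) (k n : ℕ) (x : V) :
    weightedDerivCLM 𝕜 V F k n f x = ∫ z, weightedDerivCLM 𝕜 V F k n (H z) x ∂μ := by
  have hintx : Integrable (fun z => weightedDerivCLM 𝕜 V F k n (H z) x) μ :=
    (hint (k, n)).mono' ((BoundedContinuousFunction.evalCLM 𝕜 x).continuous.comp
      ((weightedDerivCLM 𝕜 V F k n).continuous.comp hH)).aestronglyMeasurable <|
      .of_forall fun z => ((weightedDerivCLM 𝕜 V F k n (H z)).norm_coe_le_norm x).trans_eq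
        (norm_weightedDerivCLM k n (H z))
  ext v
  calc weightedDerivCLM 𝕜 V F k n f x v
      = ‖x‖ ^ k • ∂^{v} f x := by
        rw [SchwartzMap.iteratedLineDerivOp_eq_iteratedFDeriv]; rfl
    _ = ∫ z, weightedDerivCLM 𝕜 V F k n (H z) x v ∂μ := by
        rw [iteratedLineDerivOp_apply_eq_integral hH hint hf, ← integral_smul]
        simp only [SchwartzMap.iteratedLineDerivOp_eq_iteratedFDeriv]; rfl
    _ = (∫ z, weightedDerivCLM 𝕜 V F k n (H z) x ∂μ) v :=
        (ContinuousMultilinearMap.integral_apply hintx v).symm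

variable [CompleteSpace F]

/-- `L` is bounded by finitely many Schwartz seminorms, so by Hahn–Banach it factors through a
finite product of spaces of bounded continuous functions, in which the integral is a Bochner
integral. -/
theorem map_eq_integral_of_forall_apply_eq_integral (hH : Continuous H)
    (hint : ∀ i, Integrable (fun z => schwartzSeminormFamily 𝕜 V F i (H z)) μ)
    (hf : ∀ x, f x = ∫ z, H z x ∂μ) (L : 𝓢(V, F) →L[𝕜] 𝕜) : L f = ∫ z, L (H z) ∂μ := by
  obtain ⟨s, C, -, hC⟩ := Seminorm.bound_of_continuous (schwartz_withSeminorms 𝕜 V F)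
    ((normSeminorm 𝕜 𝕜).comp L.toLinearMap) (continuous_norm.comp L.continuous)
  refine map_eq_integral_of_norm_le_norm_boundedContinuousFunction (ι := s)
    (Y := fun i => V [×i.1.2]→L[ℝ] F) (fun i => weightedDerivCLM 𝕜 V F i.1.1 i.1.2)
    L.toLinearMap (C := C) (fun h => (hC h).trans (mul_le_mul_of_nonneg_left ?_ C.2)) hH
    (fun i => by simp only [norm_weightedDerivCLM]; exact hint i)
    (fun i => weightedDerivCLM_apply_eq_integral hH hint hf i.1.1 i.1.2)
  exact Seminorm.finset_sup_apply_le (norm_nonneg _) fun i hi =>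
    (norm_weightedDerivCLM i.1 i.2 h).symm.trans_le <|
      norm_le_pi_norm (fun i : s => weightedDerivCLM 𝕜 V F i.1.1 i.1.2 h) ⟨i, hi⟩

end WeakIntegral

section TemperedSchwartzFamily

variable {W V F : Type*} [NormedAddCommGroup W] [NormedSpace ℝ W] [NormedAddCommGroup V]
  [NormedSpace ℝ V] [NormedAddCommGroup F] [NormedSpace ℝ F]

theorem one_add_norm_le_mul_one_add_norm_sub {A : Type*} [SeminormedAddCommGroup A] (a b : A) :
    1 + ‖a‖ ≤ (1 + ‖b‖) * (1 + ‖a - b‖) := by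
  have h : ‖a‖ ≤ ‖b‖ + ‖a - b‖ := by simpa using norm_add_le b (a - b)
  nlinarith [mul_nonneg (norm_nonneg b) (norm_nonneg (a - b))]

theorem one_add_norm_prod_le_mul {A B : Type*} [SeminormedAddCommGroup A]
    [SeminormedAddCommGroup B] (q : A × B) : 1 + ‖q‖ ≤ (1 + ‖q.1‖) * (1 + ‖q.2‖) := by
  have h : ‖q‖ ≤ ‖q.1‖ + ‖q.2‖ :=
    max_le_add_of_nonneg (norm_nonneg _) (norm_nonneg _)
  nlinarith [mul_nonneg (norm_nonneg q.1) (norm_nonneg q.2)]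

theorem exists_one_add_norm_pow_mul_norm_iteratedFDeriv_le (g : 𝓢(V, F)) (k n : ℕ) :
    ∃ C, 0 ≤ C ∧ ∀ i ≤ n, ∀ x, (1 + ‖x‖) ^ k * ‖iteratedFDeriv ℝ i g x‖ ≤ C :=
  ⟨_, by positivity, fun _ hi x =>
    SchwartzMap.one_add_le_sup_seminorm_apply (𝕜 := ℝ) (m := (k, n)) le_rfl hi g x⟩

/-- A smooth function `Φ` of `(z, y)` which is a Schwartz function of `y`, with all weighted
derivatives (those in the parameter `z` included) growing at most polynomially in `z`. -/
structure IsTemperedSchwartzFamily (Φ : W × V → F) : Prop where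
  contDiff : ContDiff ℝ ∞ Φ
  exists_norm_iteratedFDeriv_le : ∀ k n : ℕ, ∃ (C : ℝ) (M : ℕ), 0 ≤ C ∧ ∀ i ≤ n, ∀ z y,
    (1 + ‖y‖) ^ k * ‖iteratedFDeriv ℝ i Φ (z, y)‖ ≤ C * (1 + ‖z‖) ^ M

namespace IsTemperedSchwartzFamily

theorem comp_sub (g : 𝓢(V, F)) (A : W →L[ℝ] V) :
    IsTemperedSchwartzFamily fun q : W × V => g (q.2 - A q.1) := by
  let B : W × V →L[ℝ] V := .snd ℝ W V - A ∘L .fst ℝ W V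
  refine ⟨(g.smooth ⊤).comp B.contDiff, fun k n => ?_⟩
  obtain ⟨C, hC, h⟩ := exists_one_add_norm_pow_mul_norm_iteratedFDeriv_le g k n
  refine ⟨C * (1 + ‖B‖) ^ n * (1 + ‖A‖) ^ k, k, by positivity, fun i hi z y => ?_⟩
  have hderiv : ‖iteratedFDeriv ℝ i (g ∘ B) (z, y)‖ ≤
      ‖iteratedFDeriv ℝ i g (y - A z)‖ * (1 + ‖B‖) ^ n := by
    rw [B.iteratedFDeriv_comp_right (g.smooth ⊤) _ (by exact_mod_cast le_top)]
    refine (ContinuousMultilinearMap.norm_compContinuousLinearMap_le _ _).trans ?_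
    rw [Finset.prod_const, Finset.card_univ, Fintype.card_fin]
    gcongr
    · exact le_rfl
    · calc ‖B‖ ^ i ≤ (1 + ‖B‖) ^ i := by gcongr; simp
        _ ≤ (1 + ‖B‖) ^ n := pow_le_pow_right₀ (by simp) hi
  have hpeetre : 1 + ‖y‖ ≤ (1 + ‖A‖) * (1 + ‖z‖) * (1 + ‖y - A z‖) := by
    refine (one_add_norm_le_mul_one_add_norm_sub y (A z)).trans ?_
    gcongr
    nlinarith [A.le_opNorm z, norm_nonneg A, norm_nonneg z]
  calc (1 + ‖y‖) ^ k * ‖iteratedFDeriv ℝ i (g ∘ B) (z, y)‖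
      ≤ ((1 + ‖A‖) * (1 + ‖z‖) * (1 + ‖y - A z‖)) ^ k *
          (‖iteratedFDeriv ℝ i g (y - A z)‖ * (1 + ‖B‖) ^ n) := by gcongr
    _ = ((1 + ‖y - A z‖) ^ k * ‖iteratedFDeriv ℝ i g (y - A z)‖) *
          ((1 + ‖B‖) ^ n * (1 + ‖A‖) ^ k * (1 + ‖z‖) ^ k) := by
        rw [mul_pow, mul_pow]
        ring
    _ ≤ C * ((1 + ‖B‖) ^ n * (1 + ‖A‖) ^ k * (1 + ‖z‖) ^ k) := by gcongr; exact h i hi _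
    _ = C * (1 + ‖B‖) ^ n * (1 + ‖A‖) ^ k * (1 + ‖z‖) ^ k := by ring

variable {𝕜 : Type*} [RCLike 𝕜] [NormedSpace 𝕜 F] {Φ : W × V → F}

theorem smul [IsScalarTower ℝ 𝕜 F] {a : W × V → 𝕜} (ha : a.HasTemperateGrowth)
    (hΦ : IsTemperedSchwartzFamily Φ) : IsTemperedSchwartzFamily fun q => a q • Φ q := by
  refine ⟨ha.1.smul hΦ.contDiff, fun k n => ?_⟩
  obtain ⟨K, C₁, hC₁, h₁⟩ := ha.norm_iteratedFDeriv_le_uniform n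
  obtain ⟨C₂, M, hC₂, h₂⟩ := hΦ.exists_norm_iteratedFDeriv_le (k + K) n
  refine ⟨2 ^ n * (C₁ * C₂), K + M, by positivity, fun i hi z y => ?_⟩
  have hterm : ∀ j ≤ i, (1 + ‖y‖) ^ k *
      (‖iteratedFDeriv ℝ j a (z, y)‖ * ‖iteratedFDeriv ℝ (i - j) Φ (z, y)‖) ≤
      C₁ * C₂ * (1 + ‖z‖) ^ (K + M) := fun j hj => by
    calc _ ≤ (1 + ‖y‖) ^ k * (C₁ * ((1 + ‖z‖) * (1 + ‖y‖)) ^ K *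
            ‖iteratedFDeriv ℝ (i - j) Φ (z, y)‖) := by
          gcongr
          exact (h₁ j (hj.trans hi) _).trans (by gcongr; exact one_add_norm_prod_le_mul (z, y))
      _ = C₁ * (1 + ‖z‖) ^ K *
            ((1 + ‖y‖) ^ (k + K) * ‖iteratedFDeriv ℝ (i - j) Φ (z, y)‖) := by
          rw [mul_pow]
          ring
      _ ≤ C₁ * (1 + ‖z‖) ^ K * (C₂ * (1 + ‖z‖) ^ M) := by
          gcongr _ * ?_
          exact h₂ _ ((i.sub_le j).trans hi) z y
      _ = C₁ * C₂ * (1 + ‖z‖) ^ (K + M) := by ring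
  calc (1 + ‖y‖) ^ k * ‖iteratedFDeriv ℝ i (fun q => a q • Φ q) (z, y)‖
      ≤ (1 + ‖y‖) ^ k * ∑ j ∈ Finset.range (i + 1), (i.choose j : ℝ) *
          ‖iteratedFDeriv ℝ j a (z, y)‖ * ‖iteratedFDeriv ℝ (i - j) Φ (z, y)‖ := by
        gcongr
        exact norm_iteratedFDeriv_smul_le ha.1 hΦ.contDiff (z, y) (by exact_mod_cast le_top)
    _ = ∑ j ∈ Finset.range (i + 1), (i.choose j : ℝ) * ((1 + ‖y‖) ^ k *
          (‖iteratedFDeriv ℝ j a (z, y)‖ * ‖iteratedFDeriv ℝ (i - j) Φ (z, y)‖)) := by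
        rw [Finset.mul_sum]
        exact Finset.sum_congr rfl fun j _ => by ring
    _ ≤ ∑ j ∈ Finset.range (i + 1), (i.choose j : ℝ) * (C₁ * C₂ * (1 + ‖z‖) ^ (K + M)) := by
        exact Finset.sum_le_sum fun j hj => mul_le_mul_of_nonneg_left
          (hterm j (Finset.mem_range_succ_iff.1 hj)) (Nat.cast_nonneg _)
    _ = 2 ^ i * (C₁ * C₂) * (1 + ‖z‖) ^ (K + M) := by
        rw [← Finset.sum_mul, ← Nat.cast_sum, Nat.sum_range_choose]
        push_cast
        ring
    _ ≤ 2 ^ n * (C₁ * C₂) * (1 + ‖z‖) ^ (K + M) := by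
        gcongr
        exact one_le_two

theorem iteratedFDeriv_slice (hΦ : IsTemperedSchwartzFamily Φ) (n : ℕ) (z : W) (y : V) :
    iteratedFDeriv ℝ n (fun y => Φ (z, y)) y =
      (iteratedFDeriv ℝ n Φ (z, y)).compContinuousLinearMap fun _ => .inr ℝ W V := by
  have h := (ContinuousLinearMap.inr ℝ W V).iteratedFDeriv_comp_right
    (f := fun q => Φ ((z, 0) + q)) (hΦ.contDiff.comp (contDiff_const.add contDiff_id)) y
    (i := n) (by exact_mod_cast le_top)
  rw [iteratedFDeriv_comp_add_left] at h
  have hz : ∀ y : V, (z, (0 : V)) + ContinuousLinearMap.inr ℝ W V y = (z, y) := by simp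
  simpa only [Function.comp_def, hz] using h

theorem norm_compContinuousLinearMap_inr_le {n : ℕ} (T : (W × V) [×n]→L[ℝ] F) :
    ‖T.compContinuousLinearMap fun _ => .inr ℝ W V‖ ≤ ‖T‖ := by
  refine (ContinuousMultilinearMap.norm_compContinuousLinearMap_le _ _).trans ?_
  rw [Finset.prod_const]
  exact mul_le_of_le_one_right (norm_nonneg _)
    (pow_le_one₀ (norm_nonneg _) (ContinuousLinearMap.norm_inr_le_one ℝ W V))

variable {G : W → 𝓢(V, F)}

theorem exists_seminorm_le [SMulCommClass ℝ 𝕜 F] (hΦ : IsTemperedSchwartzFamily Φ)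
    (hG : ∀ z y, G z y = Φ (z, y)) (i : ℕ × ℕ) :
    ∃ (C : ℝ) (M : ℕ), ∀ z, schwartzSeminormFamily 𝕜 V F i (G z) ≤ C * (1 + ‖z‖) ^ M := by
  obtain ⟨C, M, hC, h⟩ := hΦ.exists_norm_iteratedFDeriv_le i.1 i.2
  refine ⟨C, M, fun z => (G z).seminorm_le_bound 𝕜 _ _ (by positivity) fun y => ?_⟩
  refine le_trans ?_ (h i.2 le_rfl z y)
  rw [show ⇑(G z) = fun y => Φ (z, y) from funext (hG z), hΦ.iteratedFDeriv_slice]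
  gcongr
  · simp
  · exact norm_compContinuousLinearMap_inr_le _

theorem norm_iteratedFDeriv_sub_le (hΦ : IsTemperedSchwartzFamily Φ)
    (hG : ∀ z y, G z y = Φ (z, y)) (n : ℕ) (z z₀ : W) (y : V) :
    ‖iteratedFDeriv ℝ n (G z - G z₀) y‖ ≤
      ‖iteratedFDeriv ℝ n Φ (z, y) - iteratedFDeriv ℝ n Φ (z₀, y)‖ := by
  have hslice : ∀ z, iteratedFDeriv ℝ n (G z) y =
      (iteratedFDeriv ℝ n Φ (z, y)).compContinuousLinearMap fun _ => .inr ℝ W V := fun z => by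
    rw [show ⇑(G z) = fun y => Φ (z, y) from funext (hG z), hΦ.iteratedFDeriv_slice]
  rw [show iteratedFDeriv ℝ n (G z - G z₀) y = iteratedFDeriv ℝ n (G z) y -
    iteratedFDeriv ℝ n (G z₀) y from iteratedFDeriv_sub_apply ((G z).smooth n).contDiffAt
      ((G z₀).smooth n).contDiffAt, hslice, hslice]
  exact norm_compContinuousLinearMap_inr_le
    (iteratedFDeriv ℝ n Φ (z, y) - iteratedFDeriv ℝ n Φ (z₀, y))

theorem norm_iteratedFDeriv_sub_le_mul (hΦ : IsTemperedSchwartzFamily Φ) {s : Set W}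
    (hs : Convex ℝ s) {n : ℕ} {y : V} {D : ℝ}
    (hD : ∀ w ∈ s, ‖iteratedFDeriv ℝ (n + 1) Φ (w, y)‖ ≤ D) {z z₀ : W} (hz : z ∈ s)
    (hz₀ : z₀ ∈ s) :
    ‖iteratedFDeriv ℝ n Φ (z, y) - iteratedFDeriv ℝ n Φ (z₀, y)‖ ≤ D * ‖z - z₀‖ := by
  have hderiv : ∀ w, HasFDerivAt (fun w => iteratedFDeriv ℝ n Φ (w, y))
      ((fderiv ℝ (iteratedFDeriv ℝ n Φ) (w, y)).comp (.inl ℝ W V)) w := fun w =>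
    HasFDerivAt.comp (g := iteratedFDeriv ℝ n Φ) (f := fun w => (w, y)) w
      (hΦ.contDiff.differentiable_iteratedFDeriv (m := n)
        (by exact_mod_cast WithTop.coe_lt_top n) _).hasFDerivAt
      (hasFDerivAt_prodMk_left (𝕜 := ℝ) w y)
  refine hs.norm_image_sub_le_of_norm_hasFDerivWithin_le
    (fun w _ => (hderiv w).hasFDerivWithinAt) (fun w hw => ?_) hz₀ hz
  calc ‖(fderiv ℝ (iteratedFDeriv ℝ n Φ) (w, y)).comp (.inl ℝ W V)‖
      ≤ ‖fderiv ℝ (iteratedFDeriv ℝ n Φ) (w, y)‖ * ‖ContinuousLinearMap.inl ℝ W V‖ :=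
        ContinuousLinearMap.opNorm_comp_le _ _
    _ ≤ ‖iteratedFDeriv ℝ (n + 1) Φ (w, y)‖ := by
        rw [norm_fderiv_iteratedFDeriv]
        exact mul_le_of_le_one_right (norm_nonneg _)
          (ContinuousLinearMap.norm_inl_le_one ℝ W V)
    _ ≤ D := hD w hw

theorem continuous (hΦ : IsTemperedSchwartzFamily Φ) (hG : ∀ z y, G z y = Φ (z, y)) :
    Continuous G := by
  refine continuous_iff_continuousAt.2 fun z₀ =>
    ((schwartz_withSeminorms ℝ V F).tendsto_nhds G (G z₀)).2 ?_
  rintro ⟨k, n⟩ ε hε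
  obtain ⟨C, M, hC, h⟩ := hΦ.exists_norm_iteratedFDeriv_le k (n + 1)
  set D := C * (1 + (‖z₀‖ + 1)) ^ M with hD
  have hlip : ∀ z ∈ Metric.closedBall z₀ 1,
      SchwartzMap.seminorm ℝ k n (G z - G z₀) ≤ D * ‖z - z₀‖ := fun z hz => by
    refine SchwartzMap.seminorm_le_bound ℝ k n _ (by positivity) fun y => ?_
    have hbound : ∀ w ∈ Metric.closedBall z₀ 1,
        ‖iteratedFDeriv ℝ (n + 1) Φ (w, y)‖ ≤ D / (1 + ‖y‖) ^ k := fun w hw => by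
      rw [le_div_iff₀' (by positivity)]
      refine (h (n + 1) le_rfl w y).trans ?_
      rw [hD]
      gcongr
      exact (norm_le_norm_add_norm_sub' w z₀).trans (by gcongr; simpa [dist_eq_norm] using hw)
    calc ‖y‖ ^ k * ‖iteratedFDeriv ℝ n (G z - G z₀) y‖
        ≤ (1 + ‖y‖) ^ k * (D / (1 + ‖y‖) ^ k * ‖z - z₀‖) := by
          gcongr
          · simp
          · exact (hΦ.norm_iteratedFDeriv_sub_le hG n z z₀ y).trans <|
              hΦ.norm_iteratedFDeriv_sub_le_mul (convex_closedBall z₀ 1) hbound hz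
                (Metric.mem_closedBall_self zero_le_one)
      _ = D * ‖z - z₀‖ := by field_simp
  have hlim : Tendsto (fun z => D * ‖z - z₀‖) (𝓝 z₀) (𝓝 0) :=
    (by fun_prop : Continuous fun z : W => D * ‖z - z₀‖).tendsto' _ _ (by simp)
  filter_upwards [hlim.eventually (gt_mem_nhds hε), Metric.closedBall_mem_nhds z₀ one_pos]
    with z hz hball
  exact (hlip z hball).trans_lt hz

end IsTemperedSchwartzFamily

end TemperedSchwartzFamily

section SchwartzDecay

variable {V W E₁ E₂ F : Type*} [NormedAddCommGroup V] [NormedSpace ℝ V] [NormedAddCommGroup W]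
  [NormedSpace ℝ W] [NormedAddCommGroup E₁] [NormedSpace ℝ E₁] [NormedAddCommGroup E₂]
  [NormedSpace ℝ E₂] [NormedAddCommGroup F] [NormedSpace ℝ F]
  {𝕜 : Type*} [RCLike 𝕜] [NormedSpace 𝕜 F] [SMulCommClass ℝ 𝕜 F]

theorem exists_seminorm_pairing_compSubConst_le (B : E₁ →L[ℝ] E₂ →L[ℝ] F) (f : 𝓢(V, E₁))
    (g : 𝓢(V, E₂)) (k n l : ℕ) : ∃ C, ∀ x, (1 + ‖x‖) ^ l * SchwartzMap.seminorm 𝕜 k n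
      (SchwartzMap.pairing B f (SchwartzMap.compSubConstCLM ℝ x g)) ≤ C := by
  obtain ⟨C₁, hC₁, h₁⟩ := exists_one_add_norm_pow_mul_norm_iteratedFDeriv_le f (k + l) n
  obtain ⟨C₂, hC₂, h₂⟩ := exists_one_add_norm_pow_mul_norm_iteratedFDeriv_le g l n
  refine ⟨‖B‖ * ∑ i ∈ Finset.range (n + 1), (n.choose i : ℝ) * (C₁ * C₂), fun x => ?_⟩
  rw [← le_div_iff₀' (by positivity)]
  refine SchwartzMap.seminorm_le_bound 𝕜 k n _ (by positivity) fun y => ?_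
  rw [le_div_iff₀' (by positivity)]
  have hleibniz := B.norm_iteratedFDeriv_le_of_bilinear (f.smooth ⊤) (N := ∞) (n := n)
    ((g.smooth ⊤).comp (contDiff_id.sub contDiff_const)) y (g := fun y => g (y - x))
    (by exact_mod_cast le_top)
  have hpeetre : 1 + ‖x‖ ≤ (1 + ‖y‖) * (1 + ‖y - x‖) :=
    norm_sub_rev y x ▸ one_add_norm_le_mul_one_add_norm_sub x y
  calc (1 + ‖x‖) ^ l * (‖y‖ ^ k * ‖iteratedFDeriv ℝ n (fun y => B (f y) (g (y - x))) y‖)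
      ≤ ((1 + ‖y‖) * (1 + ‖y - x‖)) ^ l * ((1 + ‖y‖) ^ k *
          (‖B‖ * ∑ i ∈ Finset.range (n + 1), (n.choose i : ℝ) * ‖iteratedFDeriv ℝ i f y‖ *
            ‖iteratedFDeriv ℝ (n - i) (fun y => g (y - x)) y‖)) := by
        gcongr
        simp
    _ = ‖B‖ * ∑ i ∈ Finset.range (n + 1), (n.choose i : ℝ) *
          (((1 + ‖y‖) ^ (k + l) * ‖iteratedFDeriv ℝ i f y‖) *
            ((1 + ‖y - x‖) ^ l * ‖iteratedFDeriv ℝ (n - i) g (y - x)‖)) := by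
        simp only [Finset.mul_sum]
        refine Finset.sum_congr rfl fun i _ => ?_
        rw [iteratedFDeriv_comp_sub, mul_pow, pow_add]
        ring
    _ ≤ ‖B‖ * ∑ i ∈ Finset.range (n + 1), (n.choose i : ℝ) * (C₁ * C₂) := by
        gcongr with i hi
        · exact h₁ i (Finset.mem_range_succ_iff.1 hi) y
        · exact h₂ _ (n.sub_le i) _

variable [NormedSpace 𝕜 E₁] [SMulCommClass ℝ 𝕜 E₁]

theorem exists_one_add_norm_pow_mul_norm_map_apply_le (K : 𝓢(V, E₁) →L[𝕜] 𝓢(W, F)) (N : ℕ) :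
    ∃ (s : Finset (ℕ × ℕ)) (C : ℝ), 0 ≤ C ∧ ∀ f w, (1 + ‖w‖) ^ N * ‖K f w‖ ≤
      C * ∑ i ∈ s, SchwartzMap.seminorm 𝕜 i.1 i.2 f := by
  let q : Seminorm 𝕜 𝓢(W, F) := (Finset.Iic (N, 0)).sup fun i => SchwartzMap.seminorm 𝕜 i.1 i.2
  have hq : Continuous q :=
    Finset.sup_induction (p := fun q : Seminorm 𝕜 𝓢(W, F) => Continuous q) continuous_zero
      (fun _ ha _ hb => ha.sup hb)
      fun i _ => (schwartz_withSeminorms 𝕜 W F).continuous_seminorm i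
  obtain ⟨s, C, -, hC⟩ := Seminorm.bound_of_continuous (schwartz_withSeminorms 𝕜 V E₁)
    (q.comp K.toLinearMap) (hq.comp K.continuous)
  refine ⟨s, 2 ^ N * C, by positivity, fun f w => ?_⟩
  calc (1 + ‖w‖) ^ N * ‖K f w‖ ≤ 2 ^ N * q (K f) := by
        simpa only [norm_iteratedFDeriv_zero] using SchwartzMap.one_add_le_sup_seminorm_apply
          (𝕜 := 𝕜) (m := (N, 0)) le_rfl le_rfl (K f) w
    _ ≤ 2 ^ N * (C * s.sup (schwartzSeminormFamily 𝕜 V E₁) f) := by gcongr; exact hC f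
    _ ≤ 2 ^ N * (C * ∑ i ∈ s, SchwartzMap.seminorm 𝕜 i.1 i.2 f) := by
        gcongr
        simpa only [sum_apply, schwartzSeminormFamily] using
          Seminorm.finset_sup_le_sum (schwartzSeminormFamily 𝕜 V E₁) s f
    _ = 2 ^ N * C * ∑ i ∈ s, SchwartzMap.seminorm 𝕜 i.1 i.2 f := by ring

end SchwartzDecay

section WavePacket

theorem iteratedDeriv_cexp_I_mul (n : ℕ) :
    iteratedDeriv n (fun t : ℝ => cexp (I * t)) = fun t : ℝ => I ^ n * cexp (I * t) := by
  induction n with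
  | zero => simp
  | succ n ih =>
    funext t
    have h : HasDerivAt (fun t : ℝ => cexp (I * t)) (cexp (I * t) * (I * 1)) t :=
      ((Complex.ofRealCLM.hasDerivAt (x := t)).const_mul I).cexp
    rw [iteratedDeriv_succ, ih, (h.const_mul (I ^ n)).deriv]
    ring

theorem hasTemperateGrowth_cexp_I_mul : (fun t : ℝ => cexp (I * t)).HasTemperateGrowth := by
  refine ⟨(contDiff_const.mul Complex.ofRealCLM.contDiff).cexp, fun n => ⟨0, 1, fun t => ?_⟩⟩
  rw [norm_iteratedFDeriv_eq_norm_iteratedDeriv, iteratedDeriv_cexp_I_mul]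
  simp

variable {V : Type*} [NormedAddCommGroup V] [InnerProductSpace ℝ V]

theorem hasTemperateGrowth_cexp_I_mul_inner {W : Type*} [NormedAddCommGroup W] [NormedSpace ℝ W]
    {a b : W → V} (ha : a.HasTemperateGrowth) (hb : b.HasTemperateGrowth) :
    (fun q => cexp (I * (⟪a q, b q⟫ : ℝ))).HasTemperateGrowth :=
  hasTemperateGrowth_cexp_I_mul.comp ((innerSL ℝ (E := V)).bilinear_hasTemperateGrowth ha hb)

/-- The wave packet `π(x, ξ)g : y ↦ exp (i y·ξ) g (y - x)` with window `g`, as a Schwartz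
function. -/
def wavePacket (g : 𝓢(V, ℂ)) (z : V × V) : 𝓢(V, ℂ) :=
  SchwartzMap.smulLeftCLM ℂ (fun y => cexp (I * (⟪y, z.2⟫ : ℝ)))
    (SchwartzMap.compSubConstCLM ℂ z.1 g)

theorem wavePacket_apply (g : 𝓢(V, ℂ)) (z : V × V) (y : V) :
    wavePacket g z y = cexp (I * (⟪y, z.2⟫ : ℝ)) * g (y - z.1) :=
  SchwartzMap.smulLeftCLM_apply_apply
    (hasTemperateGrowth_cexp_I_mul_inner .id (.const z.2)) _ y

theorem norm_wavePacket_apply (g : 𝓢(V, ℂ)) (z : V × V) (y : V) :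
    ‖wavePacket g z y‖ = ‖g (y - z.1)‖ := by
  rw [wavePacket_apply, norm_mul, norm_exp_I_mul_ofReal, one_mul]

theorem isTemperedSchwartzFamily_wavePacket (g : 𝓢(V, ℂ)) :
    IsTemperedSchwartzFamily fun q : (V × V) × V => wavePacket g q.1 q.2 := by
  have hexp : (fun q : (V × V) × V => cexp (I * (⟪q.2, q.1.2⟫ : ℝ))).HasTemperateGrowth :=
    hasTemperateGrowth_cexp_I_mul_inner
      (ContinuousLinearMap.snd ℝ (V × V) V).hasTemperateGrowth
      (ContinuousLinearMap.snd ℝ V V ∘L .fst ℝ (V × V) V).hasTemperateGrowth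
  simpa only [wavePacket_apply] using! (IsTemperedSchwartzFamily.comp_sub g (.fst ℝ V V)).smul hexp

theorem continuous_wavePacket (g : 𝓢(V, ℂ)) : Continuous (wavePacket g) :=
  (isTemperedSchwartzFamily_wavePacket g).continuous fun _ _ => rfl

variable [FiniteDimensional ℝ V] [MeasurableSpace V] [BorelSpace V]

/-- The short-time Fourier transform `V_γ f (z) = ⟨f, π(z)γ⟩` of `f` with window `γ`. -/
def stft (γ f : 𝓢(V, ℂ)) (z : V × V) : ℂ :=
  ∫ y, f y * conj (wavePacket γ z y)

/-- The real bilinear map `(a, b) ↦ a * conj b` on `ℂ`, for which `stft γ f z` is the integral of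
the pairing of `f` with `wavePacket γ z`. -/
def mulConjCLM : ℂ →L[ℝ] ℂ →L[ℝ] ℂ :=
  (ContinuousLinearMap.mul ℝ ℂ).bilinearComp (.id ℝ ℂ) (conjCLE : ℂ →L[ℝ] ℂ)

theorem continuous_stft (γ f : 𝓢(V, ℂ)) : Continuous (stft γ f) :=
  (SchwartzMap.integralCLM ℝ volume ∘L SchwartzMap.pairing mulConjCLM f).continuous.comp
    (continuous_wavePacket γ)

theorem stft_eq_fourier (γ f : 𝓢(V, ℂ)) (z : V × V) :
    stft γ f z = 𝓕 (SchwartzMap.pairing mulConjCLM f (SchwartzMap.compSubConstCLM ℝ z.1 γ))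
      ((2 * π)⁻¹ • z.2) := by
  rw [SchwartzMap.fourier_coe, Real.fourier_eq', stft]
  refine integral_congr_ae (.of_forall fun y => ?_)
  have hphase : -2 * π * ⟪y, (2 * π)⁻¹ • z.2⟫ = -⟪y, z.2⟫ := by
    rw [real_inner_smul_right]
    field_simp
  calc f y * conj (wavePacket γ z y)
      = cexp (((-⟪y, z.2⟫ : ℝ) : ℂ) * I) * (f y * conj (γ (y - z.1))) := by
        rw [wavePacket_apply, map_mul, ← Complex.exp_conj, map_mul, conj_I, conj_ofReal]
        push_cast
        ring_nf
    _ = cexp (((-2 * π * ⟪y, (2 * π)⁻¹ • z.2⟫ : ℝ) : ℂ) * I) •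
          (f y * conj (γ (y - z.1))) := by rw [hphase, smul_eq_mul]

theorem one_add_norm_le_two_pi_mul {V W : Type*} [SeminormedAddCommGroup V]
    [SeminormedAddCommGroup W] [NormedSpace ℝ W] (z : V × W) :
    1 + ‖z‖ ≤ 2 * π * ((1 + ‖z.1‖) * (1 + ‖(2 * π)⁻¹ • z.2‖)) := by
  have hz2 : 1 + ‖z.2‖ ≤ 2 * π * (1 + ‖(2 * π)⁻¹ • z.2‖) := by
    rw [norm_smul, Real.norm_of_nonneg (by positivity), mul_add,
      mul_inv_cancel_left₀ (by positivity)]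
    linarith [Real.pi_gt_three]
  calc 1 + ‖z‖ ≤ (1 + ‖z.1‖) * (1 + ‖z.2‖) := one_add_norm_prod_le_mul z
    _ ≤ (1 + ‖z.1‖) * (2 * π * (1 + ‖(2 * π)⁻¹ • z.2‖)) := by gcongr
    _ = 2 * π * ((1 + ‖z.1‖) * (1 + ‖(2 * π)⁻¹ • z.2‖)) := by ring

theorem exists_one_add_norm_pow_mul_norm_stft_le (γ f : 𝓢(V, ℂ)) (N : ℕ) :
    ∃ C, 0 ≤ C ∧ ∀ z, (1 + ‖z‖) ^ N * ‖stft γ f z‖ ≤ C := by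
  let h (x : V) : 𝓢(V, ℂ) :=
    SchwartzMap.pairing mulConjCLM f (SchwartzMap.compSubConstCLM ℝ x γ)
  obtain ⟨s, C, hC, hfourier⟩ := exists_one_add_norm_pow_mul_norm_map_apply_le
    (SchwartzMap.fourierTransformCLM ℂ : 𝓢(V, ℂ) →L[ℂ] 𝓢(V, ℂ)) N
  choose D hD using fun i : ℕ × ℕ =>
    exists_seminorm_pairing_compSubConst_le (𝕜 := ℂ) mulConjCLM f γ i.1 i.2 N
  have key (z : V × V) : (1 + ‖z‖) ^ N * ‖stft γ f z‖ ≤ (2 * π) ^ N * (C * ∑ i ∈ s, D i) :=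
    calc (1 + ‖z‖) ^ N * ‖stft γ f z‖
        ≤ (2 * π * ((1 + ‖z.1‖) * (1 + ‖(2 * π)⁻¹ • z.2‖))) ^ N * ‖stft γ f z‖ := by
          gcongr
          exact one_add_norm_le_two_pi_mul z
      _ = (2 * π) ^ N * ((1 + ‖z.1‖) ^ N *
            ((1 + ‖(2 * π)⁻¹ • z.2‖) ^ N * ‖𝓕 (h z.1) ((2 * π)⁻¹ • z.2)‖)) := by
          rw [show stft γ f z = 𝓕 (h z.1) ((2 * π)⁻¹ • z.2) from stft_eq_fourier γ f z,
            mul_pow (2 * π), mul_pow (1 + ‖z.1‖)]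
          ring
      _ ≤ (2 * π) ^ N * ((1 + ‖z.1‖) ^ N *
            (C * ∑ i ∈ s, SchwartzMap.seminorm ℂ i.1 i.2 (h z.1))) := by
          gcongr (2 * π) ^ N * ((1 + ‖z.1‖) ^ N * ?_)
          exact hfourier (h z.1) _
      _ = (2 * π) ^ N * (C * ∑ i ∈ s,
            (1 + ‖z.1‖) ^ N * SchwartzMap.seminorm ℂ i.1 i.2 (h z.1)) := by
          rw [← Finset.mul_sum]
          ring
      _ ≤ (2 * π) ^ N * (C * ∑ i ∈ s, D i) := by
          gcongr with i
          exact hD i z.1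
  exact ⟨_, (by positivity : 0 ≤ (1 + ‖(0 : V × V)‖) ^ N * ‖stft γ f 0‖).trans (key 0), key⟩

theorem integrable_norm_stft_mul (γ f : 𝓢(V, ℂ)) {φ : V × V → ℝ} {C : ℝ} {M : ℕ}
    (hφ : AEStronglyMeasurable φ) (hle : ∀ z, ‖φ z‖ ≤ C * (1 + ‖z‖) ^ M) :
    Integrable fun z => ‖stft γ f z‖ * φ z := by
  let N := Module.finrank ℝ (V × V) + 1
  obtain ⟨D, -, hD⟩ := exists_one_add_norm_pow_mul_norm_stft_le γ f (M + N)
  have hdecay : Integrable fun z : V × V => (1 + ‖z‖) ^ (-(N : ℝ)) :=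
    integrable_one_add_norm (μ := (volume : Measure V).prod volume) (by simp [N])
  have hC : 0 ≤ C := nonneg_of_mul_nonneg_left ((norm_nonneg _).trans (hle 0)) (by positivity)
  refine (hdecay.const_mul (C * D)).mono'
    ((continuous_stft γ f).norm.aestronglyMeasurable.mul hφ) (.of_forall fun z => ?_)
  rw [norm_mul, norm_norm, Real.rpow_neg (by positivity), Real.rpow_natCast, ← div_eq_mul_inv,
    le_div_iff₀ (by positivity)]
  calc ‖stft γ f z‖ * ‖φ z‖ * (1 + ‖z‖) ^ N
      ≤ ‖stft γ f z‖ * (C * (1 + ‖z‖) ^ M) * (1 + ‖z‖) ^ N := by gcongr; exact hle z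
    _ = C * ((1 + ‖z‖) ^ (M + N) * ‖stft γ f z‖) := by rw [pow_add]; ring
    _ ≤ C * D := by gcongr; exact hD z

end WavePacket

section Reconstruction

variable {V : Type*} [NormedAddCommGroup V] [InnerProductSpace ℝ V] [FiniteDimensional ℝ V]
  [MeasurableSpace V] [BorelSpace V]

theorem integral_stft_mul_cexp (γ f : 𝓢(V, ℂ)) (x y : V) :
    ∫ ξ, stft γ f (x, ξ) * cexp (I * (⟪y, ξ⟫ : ℝ)) =
      (2 * π : ℝ) ^ Module.finrank ℝ V * (f y * conj (γ (y - x))) := by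
  let h : 𝓢(V, ℂ) := SchwartzMap.pairing mulConjCLM f (SchwartzMap.compSubConstCLM ℝ x γ)
  have hinv : ∫ ξ, cexp ((2 * π * ⟪ξ, y⟫ : ℝ) * I) * 𝓕 h ξ = f y * conj (γ (y - x)) := by
    rw [show f y * conj (γ (y - x)) = 𝓕⁻ (𝓕 h) y by
        rw [FourierTransform.fourierInv_fourier_eq]; rfl,
      SchwartzMap.fourierInv_coe, Real.fourierInv_eq']
    rfl
  calc ∫ ξ, stft γ f (x, ξ) * cexp (I * (⟪y, ξ⟫ : ℝ))
      = ∫ ξ, cexp ((2 * π * ⟪(2 * π)⁻¹ • ξ, y⟫ : ℝ) * I) * 𝓕 h ((2 * π)⁻¹ • ξ) := by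
        congr with ξ
        rw [stft_eq_fourier, real_inner_smul_left, mul_inv_cancel_left₀ (by positivity),
          real_inner_comm, mul_comm, mul_comm I]
    _ = (2 * π : ℝ) ^ Module.finrank ℝ V * (f y * conj (γ (y - x))) := by
        rw [Measure.integral_comp_smul volume
          (fun ξ => cexp ((2 * π * ⟪ξ, y⟫ : ℝ) * I) * 𝓕 h ξ), hinv, inv_pow, inv_inv,
          abs_of_nonneg (by positivity), Complex.real_smul, Complex.ofReal_pow]

theorem integrable_stft_mul_wavePacket (γ f g : 𝓢(V, ℂ)) (y : V) :
    Integrable fun z => stft γ f z * wavePacket g z y := by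
  have hcont : Continuous fun z => wavePacket g z y :=
    ((SchwartzMap.toBoundedContinuousFunctionCLM ℝ V ℂ).continuous.comp
      (continuous_wavePacket g)).eval_const y
  refine (integrable_norm_stft_mul γ f (C := SchwartzMap.seminorm ℝ 0 0 g) (M := 0)
    hcont.norm.aestronglyMeasurable fun z => ?_).mono'
      ((continuous_stft γ f).mul hcont).aestronglyMeasurable (.of_forall fun z => (norm_mul _ _).le)
  rw [norm_norm, norm_wavePacket_apply, pow_zero, mul_one]
  exact g.norm_le_seminorm ℝ _

theorem integral_stft_mul_wavePacket (γ f g : 𝓢(V, ℂ)) (y : V) :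
    ∫ z, stft γ f z * wavePacket g z y =
      ((2 * π : ℝ) ^ Module.finrank ℝ V * ∫ u, conj (γ u) * g u) * f y := by
  rw [Measure.volume_eq_prod, integral_prod _ (integrable_stft_mul_wavePacket γ f g y)]
  calc ∫ x, ∫ ξ, stft γ f (x, ξ) * wavePacket g (x, ξ) y
      = ∫ x, (2 * π : ℝ) ^ Module.finrank ℝ V * f y * (conj (γ (y - x)) * g (y - x)) := by
        congr with x
        simp only [wavePacket_apply, ← mul_assoc]
        rw [integral_mul_const, integral_stft_mul_cexp]
        ring
    _ = ((2 * π : ℝ) ^ Module.finrank ℝ V * ∫ u, conj (γ u) * g u) * f y := by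
        rw [integral_const_mul, integral_sub_left_eq_self (fun u => conj (γ u) * g u) volume y]
        ring

theorem map_eq_integral_stft_mul_map_wavePacket {γ g : 𝓢(V, ℂ)}
    (hγg : ∫ u, conj (γ u) * g u ≠ 0) (L : 𝓢(V, ℂ) →L[ℂ] ℂ) (f : 𝓢(V, ℂ)) :
    L f = ((2 * π : ℝ) ^ Module.finrank ℝ V * ∫ u, conj (γ u) * g u)⁻¹ *
      ∫ z, stft γ f z * L (wavePacket g z) := by
  set c : ℂ := (2 * π : ℝ) ^ Module.finrank ℝ V * ∫ u, conj (γ u) * g u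
  have hc : c ≠ 0 := mul_ne_zero (pow_ne_zero _ (ofReal_ne_zero.2 two_pi_pos.ne')) hγg
  have hint (i : ℕ × ℕ) :
      Integrable fun z => schwartzSeminormFamily ℂ V ℂ i (stft γ f z • wavePacket g z) := by
    obtain ⟨C, M, hle⟩ :=
      (isTemperedSchwartzFamily_wavePacket g).exists_seminorm_le (𝕜 := ℂ) (fun _ _ => rfl) i
    simp_rw [map_smul_eq_mul]
    refine integrable_norm_stft_mul γ f (C := C) (M := M) (Continuous.aestronglyMeasurable
      (((schwartz_withSeminorms ℂ V ℂ).continuous_seminorm i).comp (continuous_wavePacket g)))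
      fun z => ?_
    rw [Real.norm_of_nonneg (apply_nonneg _ _)]
    exact hle z
  have hrec : L (c • f) = ∫ z, L (stft γ f z • wavePacket g z) :=
    map_eq_integral_of_forall_apply_eq_integral
      ((continuous_stft γ f).smul (continuous_wavePacket g)) hint
      (fun y => (integral_stft_mul_wavePacket γ f g y).symm) L
  simp only [map_smul, smul_eq_mul] at hrec
  rw [← hrec, inv_mul_cancel_left₀ hc]

end Reconstruction

section SchurTest

variable {α β : Type*} [MeasurableSpace α] [MeasurableSpace β] {μ : Measure α} {ν : Measure β}

theorem rpow_lintegral_mul_le {k v : β → ℝ≥0∞} (hk : AEMeasurable k ν) (hv : AEMeasurable v ν)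
    {q : ℝ} (hq : 1 ≤ q) :
    (∫⁻ z, k z * v z ∂ν) ^ q ≤ (∫⁻ z, k z ∂ν) ^ (q - 1) * ∫⁻ z, k z * v z ^ q ∂ν := by
  have hq0 : 0 < q := one_pos.trans_le hq
  have hmono := eLpNorm'_le_eLpNorm'_mul_rpow_measure_univ one_pos hq
    (μ := ν.withDensity k) (hv.mono_ac (withDensity_absolutelyContinuous ν k)).aestronglyMeasurable
  simp only [eLpNorm'_eq_lintegral_enorm, enorm_eq_self, ENNReal.rpow_one, div_one,
    withDensity_apply k .univ, Measure.restrict_univ] at hmono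
  rw [lintegral_withDensity_eq_lintegral_mul₀ hk hv,
    lintegral_withDensity_eq_lintegral_mul₀ hk (hv.pow_const q)] at hmono
  calc (∫⁻ z, k z * v z ∂ν) ^ q
      ≤ ((∫⁻ z, k z * v z ^ q ∂ν) ^ (1 / q) * (∫⁻ z, k z ∂ν) ^ (1 - 1 / q)) ^ q := by
        gcongr
        exact hmono
    _ = (∫⁻ z, k z ∂ν) ^ (q - 1) * ∫⁻ z, k z * v z ^ q ∂ν := by
        rw [ENNReal.mul_rpow_of_nonneg _ _ hq0.le, ← ENNReal.rpow_mul, ← ENNReal.rpow_mul,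
          one_div_mul_cancel hq0.ne', ENNReal.rpow_one, sub_mul, one_mul,
          one_div_mul_cancel hq0.ne', mul_comm]

variable [SFinite μ] [SFinite ν] {K : α → β → ℝ≥0∞} {B₁ B₂ : ℝ≥0∞}

theorem lintegral_rpow_le_of_le_lintegral_kernel (hK : Measurable (Function.uncurry K))
    (hB₁ : ∀ᵐ w ∂μ, ∫⁻ z, K w z ∂ν ≤ B₁) (hB₂ : ∀ᵐ z ∂ν, ∫⁻ w, K w z ∂μ ≤ B₂)
    {u : α → ℝ≥0∞} {v : β → ℝ≥0∞} (hv : AEMeasurable v ν)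
    (huv : ∀ᵐ w ∂μ, u w ≤ ∫⁻ z, K w z * v z ∂ν) {q : ℝ} (hq : 1 ≤ q) :
    ∫⁻ w, u w ^ q ∂μ ≤ B₁ ^ (q - 1) * B₂ * ∫⁻ z, v z ^ q ∂ν := by
  have hKv : AEMeasurable (Function.uncurry fun w z => K w z * v z ^ q) (μ.prod ν) :=
    hK.aemeasurable.mul
      ((hv.pow_const q).comp_quasiMeasurePreserving Measure.quasiMeasurePreserving_snd)
  calc ∫⁻ w, u w ^ q ∂μ
      ≤ ∫⁻ w, B₁ ^ (q - 1) * ∫⁻ z, K w z * v z ^ q ∂ν ∂μ := by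
        refine lintegral_mono_ae ?_
        filter_upwards [hB₁, huv] with w hBw huw
        calc u w ^ q ≤ (∫⁻ z, K w z * v z ∂ν) ^ q := by gcongr
          _ ≤ (∫⁻ z, K w z ∂ν) ^ (q - 1) * ∫⁻ z, K w z * v z ^ q ∂ν :=
              rpow_lintegral_mul_le hK.of_uncurry_left.aemeasurable hv hq
          _ ≤ B₁ ^ (q - 1) * ∫⁻ z, K w z * v z ^ q ∂ν := by gcongr
    _ = B₁ ^ (q - 1) * ∫⁻ z, ∫⁻ w, K w z * v z ^ q ∂μ ∂ν := by
        rw [← lintegral_lintegral_swap hKv]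
        exact lintegral_const_mul'' _ hKv.lintegral_prod_right'
    _ ≤ B₁ ^ (q - 1) * ∫⁻ z, B₂ * v z ^ q ∂ν := by
        gcongr 1
        refine lintegral_mono_ae ?_
        filter_upwards [hB₂] with z hBz
        rw [lintegral_mul_const _ hK.of_uncurry_right]
        gcongr
    _ = B₁ ^ (q - 1) * B₂ * ∫⁻ z, v z ^ q ∂ν := by
        rw [lintegral_const_mul'' _ (hv.pow_const q), mul_assoc]

theorem eLpNorm_le_of_enorm_le_lintegral_kernel {F₁ F₂ : Type*} [NormedAddCommGroup F₁]
    [NormedAddCommGroup F₂] (hK : Measurable (Function.uncurry K))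
    (hB₁ : ∀ᵐ w ∂μ, ∫⁻ z, K w z ∂ν ≤ B₁) (hB₂ : ∀ᵐ z ∂ν, ∫⁻ w, K w z ∂μ ≤ B₂)
    {u : α → F₁} {v : β → F₂} (hv : AEStronglyMeasurable v ν)
    (huv : ∀ᵐ w ∂μ, ‖u w‖ₑ ≤ ∫⁻ z, K w z * ‖v z‖ₑ ∂ν) {p : ℝ≥0∞} (hp : 1 ≤ p) :
    eLpNorm u p μ ≤ B₁ ^ (1 - 1 / p.toReal) * B₂ ^ (1 / p.toReal) * eLpNorm v p ν := by
  rcases eq_or_ne p ⊤ with rfl | hp_top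
  · simp only [eLpNorm_exponent_top, ENNReal.toReal_top, div_zero, sub_zero, ENNReal.rpow_one,
      ENNReal.rpow_zero, mul_one]
    refine eLpNormEssSup_le_of_ae_enorm_bound ?_
    filter_upwards [hB₁, huv] with w hBw huw
    calc ‖u w‖ₑ ≤ ∫⁻ z, K w z * ‖v z‖ₑ ∂ν := huw
      _ ≤ ∫⁻ z, K w z * eLpNormEssSup v ν ∂ν := by
          refine lintegral_mono_ae ?_
          filter_upwards [enorm_ae_le_eLpNormEssSup v ν] with z hz
          gcongr
      _ = (∫⁻ z, K w z ∂ν) * eLpNormEssSup v ν := lintegral_mul_const _ hK.of_uncurry_left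
      _ ≤ B₁ * eLpNormEssSup v ν := by gcongr
  · have hp_zero : p ≠ 0 := (zero_lt_one.trans_le hp).ne'
    have hq : 1 ≤ p.toReal := by simpa using ENNReal.toReal_mono hp_top hp
    have hq0 : 0 < p.toReal := one_pos.trans_le hq
    rw [eLpNorm_eq_lintegral_rpow_enorm_toReal hp_zero hp_top,
      eLpNorm_eq_lintegral_rpow_enorm_toReal hp_zero hp_top]
    calc (∫⁻ w, ‖u w‖ₑ ^ p.toReal ∂μ) ^ (1 / p.toReal)
        ≤ (B₁ ^ (p.toReal - 1) * B₂ * ∫⁻ z, ‖v z‖ₑ ^ p.toReal ∂ν) ^ (1 / p.toReal) := by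
          gcongr
          exact lintegral_rpow_le_of_le_lintegral_kernel hK hB₁ hB₂ hv.enorm huv hq
      _ = B₁ ^ (1 - 1 / p.toReal) * B₂ ^ (1 / p.toReal) *
            (∫⁻ z, ‖v z‖ₑ ^ p.toReal ∂ν) ^ (1 / p.toReal) := by
          rw [ENNReal.mul_rpow_of_nonneg _ _ (by positivity),
            ENNReal.mul_rpow_of_nonneg _ _ (by positivity), ← ENNReal.rpow_mul, sub_mul, one_mul,
            mul_one_div_cancel hq0.ne']

theorem eLpNorm_le_of_enorm_le_lintegral_sub_comp {X F₁ F₂ : Type*} [AddGroup X]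
    [MeasurableSpace X] [MeasurableAdd₂ X] [MeasurableNeg X] {μ : Measure X} [SFinite μ]
    [μ.IsAddLeftInvariant] [μ.IsAddRightInvariant] [μ.IsNegInvariant] [NormedAddCommGroup F₁]
    [NormedAddCommGroup F₂] {k : X → ℝ≥0∞} (hk : Measurable k) {χ : β → X}
    (hχ : MeasurePreserving χ ν μ) {u : X → F₁} {v : β → F₂} (hv : AEStronglyMeasurable v ν)
    (huv : ∀ᵐ w ∂μ, ‖u w‖ₑ ≤ ∫⁻ z, k (w - χ z) * ‖v z‖ₑ ∂ν) {p : ℝ≥0∞} (hp : 1 ≤ p) :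
    eLpNorm u p μ ≤ (∫⁻ x, k x ∂μ) * eLpNorm v p ν := by
  have hrow (w : X) : ∫⁻ z, k (w - χ z) ∂ν = ∫⁻ x, k x ∂μ := by
    rw [hχ.lintegral_comp (f := fun x => k (w - x)) (by fun_prop), lintegral_sub_left_eq_self]
  have hcol (z : β) : ∫⁻ w, k (w - χ z) ∂μ = ∫⁻ x, k x ∂μ := lintegral_sub_right_eq_self k (χ z)
  have hexp : 1 / p.toReal ≤ 1 := by
    rcases eq_or_ne p ⊤ with rfl | hp_top
    · simp
    · exact div_le_one_of_le₀ (by simpa using ENNReal.toReal_mono hp_top hp) ENNReal.toReal_nonneg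
  have hχ_meas : Measurable χ := hχ.measurable
  convert eLpNorm_le_of_enorm_le_lintegral_kernel (K := fun w z => k (w - χ z))
    (by fun_prop) (.of_forall fun w => (hrow w).le) (.of_forall fun z => (hcol z).le) hv huv hp
  rw [← ENNReal.rpow_add_of_nonneg _ _ (sub_nonneg.2 hexp) (by positivity), sub_add_cancel,
    ENNReal.rpow_one]

end SchurTest

section WavePacketMatrix

theorem norm_sq_le_norm_fst_sq_add_norm_snd_sq {V W : Type*} [SeminormedAddCommGroup V]
    [SeminormedAddCommGroup W] (z : V × W) : ‖z‖ ^ 2 ≤ ‖z.1‖ ^ 2 + ‖z.2‖ ^ 2 := by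
  rcases max_choice ‖z.1‖ ‖z.2‖ with h | h <;> rw [Prod.norm_def, h] <;>
    linarith [sq_nonneg ‖z.1‖, sq_nonneg ‖z.2‖]

theorem lintegral_rpow_one_add_norm_sq_add_norm_sq_lt_top {V W : Type*} [NormedAddCommGroup V]
    [NormedSpace ℝ V] [FiniteDimensional ℝ V] [NormedAddCommGroup W] [NormedSpace ℝ W]
    [FiniteDimensional ℝ W] [MeasurableSpace (V × W)] [BorelSpace (V × W)] {μ : Measure (V × W)}
    [μ.IsAddHaarMeasure] {m : ℝ} (hm : (Module.finrank ℝ V + Module.finrank ℝ W : ℝ) < m) :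
    ∫⁻ z, ENNReal.ofReal ((1 + (‖z.1‖ ^ 2 + ‖z.2‖ ^ 2)) ^ (-(m / 2))) ∂μ < ⊤ := by
  have hint : Integrable (fun z : V × W => (1 + ‖z‖ ^ 2) ^ (-m / 2)) μ :=
    integrable_rpow_neg_one_add_norm_sq (by rw [Module.finrank_prod]; exact_mod_cast hm)
  have hm0 : 0 < m := lt_of_le_of_lt (by positivity) hm
  refine (lintegral_mono fun z => ENNReal.ofReal_le_ofReal ?_).trans_lt hint.lintegral_lt_top
  rw [neg_div]
  exact Real.rpow_le_rpow_of_nonpos (by positivity)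
    (add_le_add_right (norm_sq_le_norm_fst_sq_add_norm_snd_sq z) 1) (by linarith [hm0])

variable {V : Type*} [NormedAddCommGroup V] [InnerProductSpace ℝ V] [FiniteDimensional ℝ V]
  [MeasurableSpace V] [BorelSpace V]

instance isAddHaarMeasure_volume_prod_self : (volume : Measure (V × V)).IsAddHaarMeasure :=
  Measure.prod.instIsAddHaarMeasure volume volume

theorem integral_conj_mul_self_ne_zero {g : 𝓢(V, ℂ)} (hg : g ≠ 0) :
    ∫ u, conj (g u) * g u ≠ 0 := by
  obtain ⟨u, hu⟩ := DFunLike.ne_iff.1 hg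
  have hint : Integrable fun u => ‖g u‖ ^ 2 := by
    simpa using (g.memLp 2).integrable_norm_pow two_ne_zero
  have hpos : 0 < ∫ u, ‖g u‖ ^ 2 :=
    integral_pos_of_integrable_nonneg_nonzero (g.continuous.norm.pow 2) hint
      (fun _ => sq_nonneg _) (pow_ne_zero 2 (norm_ne_zero_iff.2 hu))
  simp_rw [Complex.conj_mul', ← Complex.ofReal_pow, integral_complex_ofReal]
  exact ofReal_ne_zero.2 hpos.ne'

theorem eLpNorm_map_le_of_enorm_map_wavePacket_le {X : Type*} [AddGroup X] [MeasurableSpace X]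
    [MeasurableAdd₂ X] [MeasurableNeg X] {μ : Measure X} [SFinite μ] [μ.IsAddLeftInvariant]
    [μ.IsAddRightInvariant] [μ.IsNegInvariant] {γ g : 𝓢(V, ℂ)}
    (hγg : ∫ u, conj (γ u) * g u ≠ 0) {χ : V × V → X} (hχ : MeasurePreserving χ volume μ)
    {L : X → 𝓢(V, ℂ) →L[ℂ] ℂ} {k : X → ℝ≥0∞} (hk : Measurable k)
    (hL : ∀ z w, ‖L w (wavePacket g z)‖ₑ ≤ k (w - χ z)) {p : ℝ≥0∞} (hp : 1 ≤ p) (f : 𝓢(V, ℂ)) :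
    eLpNorm (fun w => L w f) p μ ≤
      ‖((2 * π : ℝ) ^ Module.finrank ℝ V * ∫ u, conj (γ u) * g u : ℂ)⁻¹‖ₑ * (∫⁻ x, k x ∂μ) *
        eLpNorm (stft γ f) p volume := by
  set c : ℂ := ((2 * π : ℝ) ^ Module.finrank ℝ V * ∫ u, conj (γ u) * g u)⁻¹
  rw [← lintegral_const_mul _ hk]
  refine eLpNorm_le_of_enorm_le_lintegral_sub_comp (hk.const_mul _) hχ
    (continuous_stft γ f).aestronglyMeasurable (.of_forall fun w => ?_) hp
  calc ‖L w f‖ₑ = ‖∫ z, c * (stft γ f z * L w (wavePacket g z))‖ₑ := by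
        rw [map_eq_integral_stft_mul_map_wavePacket hγg, integral_const_mul]
    _ ≤ ∫⁻ z, ‖c * (stft γ f z * L w (wavePacket g z))‖ₑ := enorm_integral_le_lintegral_enorm _
    _ ≤ ∫⁻ z, ‖c‖ₑ * k (w - χ z) * ‖stft γ f z‖ₑ := by
        gcongr with z
        rw [enorm_mul, enorm_mul, mul_assoc, mul_comm ‖stft γ f z‖ₑ]
        gcongr
        exact hL z w

end WavePacketMatrix

theorem stmt2_general {V : Type*} [NormedAddCommGroup V] [InnerProductSpace ℝ V]
    [FiniteDimensional ℝ V] [MeasurableSpace V] [BorelSpace V] {g : V → ℂ} (hg : g ≠ 0) {m : ℝ}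
    (hm : 2 * (Module.finrank ℝ V : ℝ) < m) :
    ∃ C > (0 : ℝ), ∀ (G Gbar : V × V → 𝓢(V, ℂ)),
      (∀ z y, G z y = cexp (I * (⟪y, z.2⟫ : ℝ)) * g (y - z.1)) →
      (∀ z y, Gbar z y = conj (G z y)) →
      ∀ χ : V × V → V × V, MeasurePreserving χ volume volume →
      ∀ (T : 𝓢(V, ℂ) →L[ℂ] 𝓢(V, ℂ) →L[ℂ] ℂ) (A : ℝ),
      (∀ z w, ‖T (G z) (Gbar w)‖ ≤
        A * (1 + (‖(w - χ z).1‖ ^ 2 + ‖(w - χ z).2‖ ^ 2)) ^ (-(m / 2))) →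
      ∀ p : ℝ≥0∞, 1 ≤ p → ∀ f : 𝓢(V, ℂ),
        eLpNorm (fun w => T f (Gbar w)) p volume ≤
          ENNReal.ofReal (C * A) * eLpNorm (fun z => ∫ y, f y * Gbar z y) p volume := by
  let k (u : V × V) : ℝ≥0∞ := ENNReal.ofReal ((1 + (‖u.1‖ ^ 2 + ‖u.2‖ ^ 2)) ^ (-(m / 2)))
  let c : ℂ := ((2 * π : ℝ) ^ Module.finrank ℝ V * ∫ u, conj (g u) * g u)⁻¹
  let S : ℝ≥0∞ := ‖c‖ₑ * ∫⁻ u, k u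
  have hS : S ≠ ⊤ := ENNReal.mul_ne_top enorm_ne_top
    (lintegral_rpow_one_add_norm_sq_add_norm_sq_lt_top (by rwa [← two_mul])).ne
  refine ⟨S.toReal + 1, by positivity, fun G Gbar hG hGbar χ hχ T A hT p hp f => ?_⟩
  have hG_zero (u : V) : G 0 u = g u := by simp [hG]
  have hG_eq (z : V × V) : G z = wavePacket (G 0) z := by
    ext y
    rw [wavePacket_apply, hG_zero, hG]
  have hG_ne : ∫ u, conj (G 0 u) * G 0 u ≠ 0 :=
    integral_conj_mul_self_ne_zero fun h => hg (funext fun u => by rw [← hG_zero, h]; rfl)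
  have hA : 0 ≤ A :=
    nonneg_of_mul_nonneg_left ((norm_nonneg _).trans (hT 0 0)) (by positivity)
  let L (w : V × V) : 𝓢(V, ℂ) →L[ℂ] ℂ :=
    PointwiseConvergenceCLM.evalCLM (.id ℂ) ℂ (Gbar w) ∘L
      ContinuousLinearMap.toPointwiseConvergenceCLM ℂ (.id ℂ) 𝓢(V, ℂ) ℂ ∘L T
  have hL (z w : V × V) : ‖L w (wavePacket (G 0) z)‖ₑ ≤ ENNReal.ofReal A * k (w - χ z) := by
    rw [← hG_eq, ← ENNReal.ofReal_mul hA, ← ofReal_norm]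
    exact ENNReal.ofReal_le_ofReal (hT z w)
  have hstft : (fun z => ∫ y, f y * Gbar z y) = stft (G 0) f := by
    funext z
    simp only [hGbar, hG_eq z, stft]
  calc eLpNorm (fun w => T f (Gbar w)) p volume
      ≤ ‖c‖ₑ * (∫⁻ u, ENNReal.ofReal A * k u) * eLpNorm (stft (G 0) f) p volume := by
        simpa only [c, hG_zero] using! eLpNorm_map_le_of_enorm_map_wavePacket_le
          hG_ne hχ (L := L) (by fun_prop) hL hp f
    _ = S * ENNReal.ofReal A * eLpNorm (stft (G 0) f) p volume := by
        rw [lintegral_const_mul' _ _ ENNReal.ofReal_ne_top]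
        ring
    _ ≤ ENNReal.ofReal ((S.toReal + 1) * A) *
          eLpNorm (fun z => ∫ y, f y * Gbar z y) p volume := by
        rw [hstft, ENNReal.ofReal_mul (by positivity)]
        gcongr
        exact (ENNReal.ofReal_toReal hS).ge.trans (ENNReal.ofReal_le_ofReal (by linarith))

/-- if `T : 𝒮(ℝ^d) → 𝒮'(ℝ^d)` has a wave-packet matrix (with respect to the
Gaussian window `g(y) = exp(-|y|²/2)`) dominated by `A·⟨w - χ z⟩^{-m}`, `m > 2d`, where
`χ` is a measure preserving measurable bijection of `ℝ^{2d}` with measurable inverse,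
then `‖V_g (T f)‖_{L^p(ℝ^{2d})} ≤ C·A·‖V_g f‖_{L^p(ℝ^{2d})}` for all `1 ≤ p ≤ ∞`, with
`C` depending only on `m` and `d`.  Here `G z` is the wave packet `π(z)g` and `Gbar z`
its complex conjugate, both elements of `𝒮(ℝ^d)`; the pairing `⟨u, π(w)g⟩` of a tempered
distribution `u` with `π(w)g` is `u (Gbar w)`. -/
theorem stmt2 (d : ℕ) (hd : 1 ≤ d) (m : ℝ) (hm : 2 * (d : ℝ) < m) :
    ∃ C > (0 : ℝ), ∀ (G Gbar : P d → SCH d),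
      (∀ (z : P d) (y : E d), G z y =
        Complex.exp (Complex.I * (⟪y, z.2⟫ : ℂ)) * Real.exp (-‖y - z.1‖ ^ 2 / 2)) →
      (∀ (z : P d) (y : E d), Gbar z y =
        Complex.exp (-Complex.I * (⟪y, z.2⟫ : ℂ)) * Real.exp (-‖y - z.1‖ ^ 2 / 2)) →
      ∀ (χ χinv : P d → P d),
        Measurable χ → Measurable χinv →
        Function.LeftInverse χinv χ → Function.RightInverse χinv χ →
        MeasurePreserving χ volume volume →
      ∀ (T : SCH d →L[ℂ] (SCH d →L[ℂ] ℂ)) (A : ℝ), 0 ≤ A →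
      (∀ z w : P d, ‖T (G z) (Gbar w)‖ ≤ A * (1 + ensq (w - χ z)) ^ (-(m / 2))) →
      ∀ p : ℝ≥0∞, 1 ≤ p → ∀ f : SCH d,
        eLpNorm (fun w : P d => T f (Gbar w)) p volume ≤
          ENNReal.ofReal (C * A) *
            eLpNorm (fun z : P d => ∫ y, f y * Gbar z y) p volume := by
  have hg : (fun u : E d => (Real.exp (-‖u‖ ^ 2 / 2) : ℂ)) ≠ 0 :=
    fun h => (Real.exp_pos _).ne' (ofReal_eq_zero.1 (congrFun h 0))
  obtain ⟨C, hC, hbound⟩ := stmt2_general hg (m := m) (by rwa [finrank_euclideanSpace_fin])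
  refine ⟨C, hC, fun G Gbar hG hGbar χ _ _ _ _ _ hχ T A _ =>
    hbound G Gbar hG (fun z y => ?_) χ hχ T A⟩
  rw [hG, hGbar, map_mul, ← Complex.exp_conj, map_mul, conj_I, conj_ofReal, conj_ofReal]
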